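/- arXiv:1707.02226 — 6 statements merged into one kernel-verified Lean document; each statement's English description precedes it below -/
import Mathlib

section
/- Let p : E ⥤ B be a Grothendieck fibration and let b be an object of B. Then the canonical inclusion of the strict fiber E_b (the category whose objects are the objects e of E with p(e) = b and whose morphisms are the morphisms of E sent by p to the identity of b) into the structured-arrow category b ↓ p (objects: pairs (e, u : b → p(e)), the inclusion sending e to (e, id_b)) is an initial functor; consequently, for every functor F : E → V into a complete category V, the right Kan extension Ran_p F evaluated at b is the limit of the restriction of F to E_b. -/
open CategoryTheory CategoryTheory.Limits

universe v₁ v₂ v₃ u₁ u₂ u₃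

namespace Stmt0

variable {E : Type u₁} {B : Type u₂} [Category.{v₁} E] [Category.{v₂} B]

/-- The canonical inclusion of the strict fiber `E_b` of `p : E ⥤ B` over `b` (objects: `e : E`
with `p.obj e = b`; morphisms: those of `E` lying over `𝟙 b`) into the structured-arrow
category `b ↓ p`, sending `e` to the pair `(e, 𝟙 b)`. -/
def fiberToStructuredArrow (p : E ⥤ B) (b : B) :
    p.Fiber b ⥤ StructuredArrow b p where
  obj e := StructuredArrow.mk (Y := e.1) (eqToHom e.2.symm)
  map {e e'} φ := StructuredArrow.homMk φ.1 (by
    haveI := φ.2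
    have h := IsHomLift.fac' p (𝟙 b) φ.1
    dsimp
    rw [h]
    simp)

end Stmt0

open Stmt0

/-!
Fix `c = (e', u : b ⟶ p e')` in `b ↓ p`. An object of the comma category of `E_b ⥤ b ↓ p` over `c`
is nothing but a morphism `e ⟶ e'` of `E` lying over `u`, and a morphism between two such objects
is a factorization through a morphism lying over `𝟙 b`. So a cartesian lift of `u` is a terminal
object of that comma category. Hence the inclusion is a left adjoint, in particular initial, and
the limits over `b ↓ p` that compute `Ran_p F` pointwise may be taken over `E_b`.
-/

namespace Stmt0

variable {E : Type u₁} {B : Type u₂} {V : Type u₃} [Category.{v₁} E] [Category.{v₂} B]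
  [Category.{v₃} V] {p : E ⥤ B} {b : B}

theorem isHomLift_iff_eqToHom_comp_map {e e' : E} (he : p.obj e = b) (u : b ⟶ p.obj e')
    (φ : e ⟶ e') : p.IsHomLift u φ ↔ eqToHom he.symm ≫ p.map φ = u := by
  subst he
  rw [eqToHom_refl, Category.id_comp]
  exact ⟨fun _ ↦ (IsHomLift.eq_of_isHomLift p u φ).symm, fun h ↦ h ▸ inferInstance⟩

section CostructuredArrow

variable {c : StructuredArrow b p}

/-- The morphism of `E` underlying an object of the comma category of `E_b ⥤ b ↓ p` over `c`. -/
def underlyingHom (y : CostructuredArrow (fiberToStructuredArrow p b) c) : y.left.1 ⟶ c.right :=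
  y.hom.right

instance isHomLift_underlyingHom (y : CostructuredArrow (fiberToStructuredArrow p b) c) :
    p.IsHomLift c.hom (underlyingHom y) :=
  (isHomLift_iff_eqToHom_comp_map y.left.2 c.hom (underlyingHom y)).2 (StructuredArrow.w y.hom)

/-- A morphism `φ` lying over the structure map of `c : b ↓ p`, as an object of the comma category
of the inclusion `E_b ⥤ b ↓ p` over `c`. -/
def costructuredArrowOfIsHomLift {e : E} (φ : e ⟶ c.right) [p.IsHomLift c.hom φ] :
    CostructuredArrow (fiberToStructuredArrow p b) c :=
  have he : p.obj e = b := IsHomLift.domain_eq p c.hom φ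
  CostructuredArrow.mk (Y := Functor.Fiber.mk he)
    (StructuredArrow.homMk φ ((isHomLift_iff_eqToHom_comp_map he c.hom φ).1 inferInstance))

noncomputable def isTerminalOfIsCartesian {e : E} (φ : e ⟶ c.right) [p.IsCartesian c.hom φ] :
    IsTerminal (costructuredArrowOfIsHomLift φ) :=
  IsTerminal.ofUniqueHom
    (fun y ↦ CostructuredArrow.homMk
      ⟨Functor.IsCartesian.map p c.hom φ (underlyingHom y),
        Functor.IsCartesian.map_isHomLift p c.hom φ (underlyingHom y)⟩
      (StructuredArrow.hom_ext _ _ (Functor.IsCartesian.fac p c.hom φ (underlyingHom y))))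
    (fun y χ ↦ by
      have fac : χ.left.1 ≫ φ = underlyingHom y :=
        congrArg StructuredArrow.Hom.right (CostructuredArrow.w χ)
      have : p.IsHomLift (a := y.left.1) (b := e) (𝟙 b) χ.left.1 := χ.left.2
      exact CostructuredArrow.hom_ext _ _
        (Subtype.ext (Functor.IsCartesian.map_uniq p c.hom φ (underlyingHom y) χ.left.1 fac)))

end CostructuredArrow

instance isLeftAdjoint_fiberToStructuredArrow (p : E ⥤ B) [p.IsPreFibered] (b : B) :
    (fiberToStructuredArrow p b).IsLeftAdjoint :=
  have (c : StructuredArrow b p) :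
      HasTerminal (CostructuredArrow (fiberToStructuredArrow p b) c) :=
    (isTerminalOfIsCartesian (Functor.IsPreFibered.pullbackMap rfl c.hom)).hasTerminal
  isLeftAdjoint_of_costructuredArrowTerminals _

section KanExtension

variable {F : E ⥤ V} {R : B ⥤ V}

/-- The cone over `F` restricted to `E_b` with apex `R b` given by a right extension
`α : p ⋙ R ⟶ F` of `F` along `p`; its component at `e` is `R b = R (p e) ⟶ F e`. -/
def fiberCone (α : p ⋙ R ⟶ F) (b : B) :
    Cone ((Functor.Fiber.fiberInclusion : p.Fiber b ⥤ E) ⋙ F) :=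
  ((Functor.RightExtension.mk R α).coneAt b).whisker (fiberToStructuredArrow p b)

theorem hasPointwiseRightKanExtensionAt_of_hasLimit_fiber [(fiberToStructuredArrow p b).Initial]
    [HasLimit ((Functor.Fiber.fiberInclusion : p.Fiber b ⥤ E) ⋙ F)] :
    p.HasPointwiseRightKanExtensionAt F b :=
  have : HasLimit (fiberToStructuredArrow p b ⋙ StructuredArrow.proj b p ⋙ F) :=
    inferInstanceAs (HasLimit ((Functor.Fiber.fiberInclusion : p.Fiber b ⥤ E) ⋙ F))
  Functor.Initial.hasLimit_of_comp (fiberToStructuredArrow p b)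

noncomputable def isLimitFiberCone [(fiberToStructuredArrow p b).Initial] {α : p ⋙ R ⟶ F}
    (h : (Functor.RightExtension.mk R α).IsPointwiseRightKanExtensionAt b) :
    IsLimit (fiberCone α b) :=
  (Functor.Initial.isLimitWhiskerEquiv (fiberToStructuredArrow p b) _).symm h

end KanExtension

end Stmt0

theorem stmt0_general {E : Type u₁} {B : Type u₂} [Category.{v₁} E] [Category.{v₂} B]
    (p : E ⥤ B) [p.IsPreFibered] (b : B) :
    (fiberToStructuredArrow p b).IsLeftAdjoint ∧
    ∀ {V : Type u₃} [Category.{v₃} V] (F : E ⥤ V)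
      [∀ b', HasLimit ((Functor.Fiber.fiberInclusion : p.Fiber b' ⥤ E) ⋙ F)]
      (R : B ⥤ V) (α : p ⋙ R ⟶ F) [R.IsRightKanExtension α],
      Nonempty (IsLimit (fiberCone α b)) := by
  refine ⟨inferInstance, fun F _ R α _ ↦ ?_⟩
  have : p.HasPointwiseRightKanExtension F :=
    fun _ ↦ hasPointwiseRightKanExtensionAt_of_hasLimit_fiber
  exact ⟨isLimitFiberCone (Functor.isPointwiseRightKanExtensionOfIsRightKanExtension R α b)⟩

/-- Let `p : E ⥤ B` be a Grothendieck fibration and `b : B`.  Then the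
canonical inclusion of the strict fiber `E_b` into the structured-arrow category `b ↓ p`
is an initial functor; consequently, for every functor `F : E ⥤ V` into a complete
category `V`, the right Kan extension `Ran_p F` evaluated at `b` is the limit of the
restriction of `F` to `E_b`. -/
theorem stmt0 {E : Type u₁} {B : Type u₂} [Category.{v₁} E] [Category.{v₂} B]
    (p : E ⥤ B) [p.IsFibered] (b : B) :
    (fiberToStructuredArrow p b).Initial ∧
    ∀ {V : Type u₃} [Category.{v₃} V]
      [HasLimitsOfSize.{v₁, max u₁ v₂} V] [HasLimitsOfSize.{v₁, u₁} V]
      (F : E ⥤ V) (R : B ⥤ V) (α : p ⋙ R ⟶ F) (_ : R.IsRightKanExtension α),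
      Nonempty (R.obj b ≅
        limit ((Functor.Fiber.fiberInclusion : p.Fiber b ⥤ E) ⋙ F)) := by
  obtain ⟨_, isLimit_fiberCone⟩ := stmt0_general p b
  exact ⟨inferInstance, fun F R α _ ↦ (isLimit_fiberCone F R α).map
    fun h ↦ h.conePointUniqueUpToIso (limit.isLimit _)⟩
end

section
/- Let L : C ⥤ D and R : D ⥤ C be an adjoint pair L ⊣ R with unit η̄ : id_C ⇒ R∘L and counit ε̄ : L∘R ⇒ id_D, and let (T, μ, η) be a monad on C. Assume that ε̄ is a natural isomorphism and that the natural transformation L∘T ⇒ L∘T∘R∘L with components L(T(η̄_c)) is a natural isomorphism. Then the composite functor L∘T∘R carries a monad structure on D whose multiplication is the composite LTRLTR ⇒ LTTR ⇒ LTR (the inverse of the isomorphism L(T(η̄)) whiskered with T∘R, followed by L(μ R)) and whose unit is the composite id_D ⇒ LR ⇒ LTR (the inverse of ε̄ followed by L(η R)); i.e. these data satisfy the monad unit and associativity laws. -/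
open CategoryTheory

universe v₁ v₂ u₁ u₂

namespace Stmt5

variable {C : Type u₁} {D : Type u₂} [Category.{v₁} C] [Category.{v₂} D]

/-- The composite endofunctor `L ∘ T ∘ R` on `D`. -/
abbrev ltr (L : C ⥤ D) (R : D ⥤ C) (T : CategoryTheory.Monad C) : D ⥤ D :=
  R ⋙ (T : C ⥤ C) ⋙ L

/-- The unit of the induced monad structure at `d`: the composite
`d ⟶ LR(d) ⟶ LTR(d)`, i.e. the inverse of `ε̄_d` followed by `L(η_{R d})`. -/
noncomputable def ltrUnit (L : C ⥤ D) (R : D ⥤ C) (adj : L ⊣ R) (T : CategoryTheory.Monad C)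
    [∀ d : D, IsIso (adj.counit.app d)] (d : D) : d ⟶ (ltr L R T).obj d :=
  inv (adj.counit.app d) ≫ L.map (T.η.app (R.obj d))

/-- The multiplication of the induced monad structure at `d`: the composite
`LTRLTR(d) ⟶ LTTR(d) ⟶ LTR(d)`, i.e. the inverse of the component at `TR(d)` of the
natural isomorphism `L(T(η̄))`, followed by `L(μ_{R d})`. -/
noncomputable def ltrMul (L : C ⥤ D) (R : D ⥤ C) (adj : L ⊣ R) (T : CategoryTheory.Monad C)
    [∀ c : C, IsIso (L.map ((T : C ⥤ C).map (adj.unit.app c)))] (d : D) :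
    (ltr L R T).obj ((ltr L R T).obj d) ⟶ (ltr L R T).obj d :=
  inv (L.map ((T : C ⥤ C).map (adj.unit.app ((T : C ⥤ C).obj (R.obj d))))) ≫
    L.map (T.μ.app (R.obj d))

end Stmt5

open Stmt5

/-!
Write `M = LTR`. Since `L(T(η̄_c))` is invertible, an equation between morphisms out of `M(L c)`
may be checked after precomposition with it. For `f : c ⟶ T(R d)` this precomposition turns
`M(L f)` followed by the multiplication of `M` into `L` of the Kleisli extension `T f ≫ μ` of `f`.
Each law of `M` involving the multiplication thereby becomes the image under `L` of the
corresponding law of `T`.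
-/

namespace Stmt5

variable {C : Type u₁} {D : Type u₂} [Category.{v₁} C] [Category.{v₂} D]
  {L : C ⥤ D} {R : D ⥤ C} (adj : L ⊣ R) (T : CategoryTheory.Monad C)

theorem inv_counit_app_obj (c : C) [IsIso (adj.counit.app (L.obj c))] :
    inv (adj.counit.app (L.obj c)) = L.map (adj.unit.app c) :=
  IsIso.inv_eq_of_inv_hom_id (adj.left_triangle_components c)

section Unit

variable [∀ d : D, IsIso (adj.counit.app d)]

theorem ltrUnit_naturality {d d' : D} (f : d ⟶ d') :
    f ≫ ltrUnit L R adj T d' = ltrUnit L R adj T d ≫ (ltr L R T).map f := by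
  have inv_counit_naturality :
      f ≫ inv (adj.counit.app d') = inv (adj.counit.app d) ≫ L.map (R.map f) := by
    rw [IsIso.eq_inv_comp, ← adj.counit_naturality_assoc, IsIso.hom_inv_id, Category.comp_id]
  simp only [ltrUnit, Functor.comp_map, Category.assoc, reassoc_of% inv_counit_naturality,
    ← L.map_comp, T.unit_naturality]

theorem ltrUnit_obj (c : C) :
    ltrUnit L R adj T (L.obj c) = L.map (T.η.app c) ≫ L.map (T.map (adj.unit.app c)) := by
  rw [ltrUnit, inv_counit_app_obj, ← L.map_comp, ← L.map_comp, ← T.unit_naturality]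
  rfl

theorem ltr_map_ltrUnit (d : D) :
    (ltr L R T).map (ltrUnit L R adj T d) =
      L.map (T.map (adj.unit.app (R.obj d))) ≫ (ltr L R T).map (L.map (T.η.app (R.obj d))) := by
  rw [ltrUnit, Functor.map_comp, ← adj.inv_counit_map, ← R.map_inv]
  rfl

end Unit

section Mul

variable [∀ c : C, IsIso (L.map ((T : C ⥤ C).map (adj.unit.app c)))]

theorem map_map_unit_comp_ltrMul (d : D) :
    L.map (T.map (adj.unit.app (T.obj (R.obj d)))) ≫ ltrMul L R adj T d =
      L.map (T.μ.app (R.obj d)) :=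
  IsIso.hom_inv_id_assoc _ _

theorem map_map_unit_comp_ltr_map_comp_ltrMul {c : C} {d : D} (f : c ⟶ T.obj (R.obj d)) :
    L.map (T.map (adj.unit.app c)) ≫ (ltr L R T).map (L.map f) ≫ ltrMul L R adj T d =
      L.map (T.map f ≫ T.μ.app (R.obj d)) := by
  have unit_naturality :
      L.map (T.map (adj.unit.app c)) ≫ (ltr L R T).map (L.map f) =
        L.map (T.map f) ≫ L.map (T.map (adj.unit.app (T.obj (R.obj d)))) := by
    simpa only [Functor.comp_map, Functor.map_comp] using
      congrArg (fun g => L.map (T.map g)) (adj.unit_naturality f)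
  rw [← Category.assoc, unit_naturality, Category.assoc, map_map_unit_comp_ltrMul, L.map_comp]

theorem ltrMul_naturality {d d' : D} (f : d ⟶ d') :
    (ltr L R T).map ((ltr L R T).map f) ≫ ltrMul L R adj T d' =
      ltrMul L R adj T d ≫ (ltr L R T).map f := by
  rw [← cancel_epi (L.map (T.map (adj.unit.app (T.obj (R.obj d)))))]
  calc
    _ = L.map (T.map (T.map (R.map f)) ≫ T.μ.app (R.obj d')) :=
      map_map_unit_comp_ltr_map_comp_ltrMul adj T (T.map (R.map f))
    _ = L.map (T.μ.app (R.obj d)) ≫ (ltr L R T).map f := by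
      rw [T.mu_naturality, L.map_comp]
      rfl
    _ = _ := by rw [← map_map_unit_comp_ltrMul adj, Category.assoc]

theorem ltrMul_assoc (d : D) :
    (ltr L R T).map (ltrMul L R adj T d) ≫ ltrMul L R adj T d =
      ltrMul L R adj T ((ltr L R T).obj d) ≫ ltrMul L R adj T d := by
  set c := T.obj (R.obj d)
  rw [← cancel_epi ((ltr L R T).map (L.map (T.map (adj.unit.app c)))),
    ← cancel_epi (L.map (T.map (adj.unit.app (T.obj c))))]
  calc
    _ = L.map (T.map (adj.unit.app (T.obj c))) ≫
          (ltr L R T).map (L.map (T.μ.app (R.obj d))) ≫ ltrMul L R adj T d := by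
      rw [← Functor.map_comp_assoc, map_map_unit_comp_ltrMul]
    _ = L.map (T.map (T.μ.app (R.obj d)) ≫ T.μ.app (R.obj d)) :=
      map_map_unit_comp_ltr_map_comp_ltrMul adj T _
    _ = L.map (T.μ.app c) ≫ L.map (T.μ.app (R.obj d)) := by
      rw [T.assoc, L.map_comp]
    _ = L.map (T.μ.app c ≫ T.map (adj.unit.app c)) ≫ ltrMul L R adj T d := by
      rw [L.map_comp, Category.assoc, map_map_unit_comp_ltrMul]
    _ = L.map (T.map (T.map (adj.unit.app c)) ≫ T.μ.app (R.obj (L.obj c))) ≫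
          ltrMul L R adj T d :=
      congrArg (L.map · ≫ _) (T.mu_naturality C (adj.unit.app c)).symm
    _ = _ := by
      rw [← map_map_unit_comp_ltr_map_comp_ltrMul adj]
      simp only [Category.assoc]
      rfl

variable [∀ d : D, IsIso (adj.counit.app d)]

theorem ltrUnit_comp_ltrMul (d : D) :
    ltrUnit L R adj T ((ltr L R T).obj d) ≫ ltrMul L R adj T d = 𝟙 _ := by
  calc
    _ = L.map (T.η.app (T.obj (R.obj d))) ≫ L.map (T.μ.app (R.obj d)) := by
      rw [← map_map_unit_comp_ltrMul adj, ← Category.assoc, ← ltrUnit_obj]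
      rfl
    _ = 𝟙 _ := by
      rw [← L.map_comp, T.left_unit, L.map_id]

theorem ltr_map_ltrUnit_comp_ltrMul (d : D) :
    (ltr L R T).map (ltrUnit L R adj T d) ≫ ltrMul L R adj T d = 𝟙 _ := by
  rw [ltr_map_ltrUnit, Category.assoc, map_map_unit_comp_ltr_map_comp_ltrMul, T.right_unit]
  exact L.map_id _

end Mul

end Stmt5

/-- Let `L ⊣ R` be an adjunction with unit `η̄` and counit `ε̄` and let
`(T, μ, η)` be a monad on `C`.  Assume that `ε̄` is a natural isomorphism and that the
natural transformation `L∘T ⇒ L∘T∘R∘L` with components `L(T(η̄_c))` is a natural isomorphism.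
Then the composite functor `L∘T∘R` carries a monad structure on `D` with multiplication
`LTRLTR ⇒ LTTR ⇒ LTR` (the inverse of `L(T(η̄))` whiskered with `T∘R`, followed by `L(μ R)`)
and unit `id_D ⇒ LR ⇒ LTR` (the inverse of `ε̄` followed by `L(η R)`): these data are natural
and satisfy the monad unit and associativity laws. -/
theorem stmt5 {C : Type u₁} {D : Type u₂} [Category.{v₁} C] [Category.{v₂} D]
    (L : C ⥤ D) (R : D ⥤ C) (adj : L ⊣ R) (T : CategoryTheory.Monad C)
    [∀ d : D, IsIso (adj.counit.app d)]
    [∀ c : C, IsIso (L.map ((T : C ⥤ C).map (adj.unit.app c)))] :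
    -- the unit is a natural transformation
    (∀ {d d' : D} (f : d ⟶ d'),
      f ≫ ltrUnit L R adj T d' = ltrUnit L R adj T d ≫ (ltr L R T).map f) ∧
    -- the multiplication is a natural transformation
    (∀ {d d' : D} (f : d ⟶ d'),
      (ltr L R T).map ((ltr L R T).map f) ≫ ltrMul L R adj T d'
        = ltrMul L R adj T d ≫ (ltr L R T).map f) ∧
    -- left unit law
    (∀ d : D, ltrUnit L R adj T ((ltr L R T).obj d) ≫ ltrMul L R adj T d = 𝟙 _) ∧
    -- right unit law
    (∀ d : D, (ltr L R T).map (ltrUnit L R adj T d) ≫ ltrMul L R adj T d = 𝟙 _) ∧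
    -- associativity law
    (∀ d : D, (ltr L R T).map (ltrMul L R adj T d) ≫ ltrMul L R adj T d
        = ltrMul L R adj T ((ltr L R T).obj d) ≫ ltrMul L R adj T d) := by
  exact ⟨ltrUnit_naturality adj T, ltrMul_naturality adj T, ltrUnit_comp_ltrMul adj T,
    ltr_map_ltrUnit_comp_ltrMul adj T, ltrMul_assoc adj T⟩
end

section
/- Let L : C ⥤ D and R : D ⥤ C be an adjoint pair L ⊣ R with unit η̄ and counit ε̄, let (T, μ, η) be a monad on C, assume ε̄ : L∘R ⇒ id_D and L(T(η̄)) : L∘T ⇒ L∘T∘R∘L are natural isomorphisms, and equip L∘T∘R with the induced monad structure (multiplication LTRLTR ⇒ LTTR ⇒ LTR via the inverse of L(T(η̄)) whiskered with T∘R followed by L(μ R); unit id_D ⇒ LR ⇒ LTR via the inverse of ε̄ followed by L(η R)). Then for every object d of D and every morphism h : LTR(d) → d, the map h makes d into an algebra for the monad L∘T∘R if and only if its adjunct T(R(d)) → R(d) under the adjunction L ⊣ R makes R(d) into an algebra for the monad T. -/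
open CategoryTheory

universe v₁ v₂ u₁ u₂

namespace Stmt6

variable {C : Type u₁} {D : Type u₂} [Category.{v₁} C] [Category.{v₂} D]

/-- The composite endofunctor `L ∘ T ∘ R` on `D`. -/
abbrev ltr (L : C ⥤ D) (R : D ⥤ C) (T : CategoryTheory.Monad C) : D ⥤ D :=
  R ⋙ (T : C ⥤ C) ⋙ L

/-- The unit of the induced monad structure on `L∘T∘R` at `d`: the inverse of `ε̄_d`
followed by `L(η_{R d})`. -/
noncomputable def ltrUnit (L : C ⥤ D) (R : D ⥤ C) (adj : L ⊣ R) (T : CategoryTheory.Monad C)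
    [∀ d : D, IsIso (adj.counit.app d)] (d : D) : d ⟶ (ltr L R T).obj d :=
  inv (adj.counit.app d) ≫ L.map (T.η.app (R.obj d))

/-- The multiplication of the induced monad structure on `L∘T∘R` at `d`: the inverse of the
component at `TR(d)` of the natural isomorphism `L(T(η̄))`, followed by `L(μ_{R d})`. -/
noncomputable def ltrMul (L : C ⥤ D) (R : D ⥤ C) (adj : L ⊣ R) (T : CategoryTheory.Monad C)
    [∀ c : C, IsIso (L.map ((T : C ⥤ C).map (adj.unit.app c)))] (d : D) :
    (ltr L R T).obj ((ltr L R T).obj d) ⟶ (ltr L R T).obj d :=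
  inv (L.map ((T : C ⥤ C).map (adj.unit.app ((T : C ⥤ C).obj (R.obj d))))) ≫
    L.map (T.μ.app (R.obj d))

end Stmt6

open Stmt6

/-! Transposition along `L ⊣ R` is a bijection natural in the source, so each algebra law for the
adjunct of `h` is equivalent to an equation between morphisms out of `L(R d)` or `L(T(T(R d)))`.
These equations are the algebra laws for `h` precomposed with `ε̄_d` and with `L(T(η̄))` at
`T(R d)`, both of which are invertible. -/

namespace Stmt6

variable {C : Type u₁} {D : Type u₂} [Category.{v₁} C] [Category.{v₂} D]
  {L : C ⥤ D} {R : D ⥤ C} (adj : L ⊣ R)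

lemma comp_homEquiv_eq_id_iff {c : C} {d : D} [IsIso (adj.counit.app d)]
    (f : R.obj d ⟶ c) (h : L.obj c ⟶ d) :
    f ≫ adj.homEquiv c d h = 𝟙 (R.obj d) ↔ inv (adj.counit.app d) ≫ L.map f ≫ h = 𝟙 d := by
  rw [← adj.homEquiv_naturality_left, adj.homEquiv_apply_eq, adj.homEquiv_symm_id]
  exact (inv_comp_eq_id (adj.counit.app d)).symm

lemma map_homEquiv_comp_homEquiv (F : C ⥤ C) {c : C} {d e : D}
    (h : L.obj c ⟶ d) (k : L.obj (F.obj (R.obj d)) ⟶ e) :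
    F.map (adj.homEquiv c d h) ≫ adj.homEquiv _ e k =
      adj.homEquiv (F.obj c) e (L.map (F.map (adj.unit.app c)) ≫ L.map (F.map (R.map h)) ≫ k) := by
  rw [← adj.homEquiv_naturality_left, adj.homEquiv_unit c d h, F.map_comp, L.map_comp,
    Category.assoc]

lemma map_homEquiv_comp_homEquiv_eq_iff (F : C ⥤ C) {c : C} {d e : D}
    [IsIso (L.map (F.map (adj.unit.app c)))]
    (h : L.obj c ⟶ d) (k : L.obj (F.obj (R.obj d)) ⟶ e) (g : L.obj (F.obj c) ⟶ e) :
    F.map (adj.homEquiv c d h) ≫ adj.homEquiv _ e k = adj.homEquiv _ e g ↔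
      L.map (F.map (R.map h)) ≫ k = inv (L.map (F.map (adj.unit.app c))) ≫ g := by
  rw [map_homEquiv_comp_homEquiv, Equiv.apply_eq_iff_eq, IsIso.eq_inv_comp]

end Stmt6

theorem stmt6_general {C : Type u₁} {D : Type u₂} [Category.{v₁} C] [Category.{v₂} D]
    {L : C ⥤ D} {R : D ⥤ C} (adj : L ⊣ R) (F : C ⥤ C) {d : D}
    [IsIso (adj.counit.app d)] [IsIso (L.map (F.map (adj.unit.app (F.obj (R.obj d)))))]
    (u : R.obj d ⟶ F.obj (R.obj d)) (m : F.obj (F.obj (R.obj d)) ⟶ F.obj (R.obj d))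
    (h : L.obj (F.obj (R.obj d)) ⟶ d) :
    ((inv (adj.counit.app d) ≫ L.map u) ≫ h = 𝟙 d ∧
      L.map (F.map (R.map h)) ≫ h =
        (inv (L.map (F.map (adj.unit.app (F.obj (R.obj d))))) ≫ L.map m) ≫ h) ↔
    (u ≫ adj.homEquiv _ d h = 𝟙 (R.obj d) ∧
      F.map (adj.homEquiv _ d h) ≫ adj.homEquiv _ d h = m ≫ adj.homEquiv _ d h) := by
  rw [Category.assoc, Category.assoc, comp_homEquiv_eq_id_iff, ← adj.homEquiv_naturality_left m,
    map_homEquiv_comp_homEquiv_eq_iff]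

/-- Let `L ⊣ R` be an adjunction with unit `η̄` and counit `ε̄`, let `T` be a
monad on `C`, assume `ε̄ : L∘R ⇒ id_D` and `L(T(η̄)) : L∘T ⇒ L∘T∘R∘L` are natural isomorphisms,
and equip `L∘T∘R` with the induced monad structure.  Then for every object `d` of `D` and
every morphism `h : LTR(d) ⟶ d`, the map `h` makes `d` into an algebra for the monad `L∘T∘R`
if and only if its adjunct `T(R(d)) ⟶ R(d)` under `L ⊣ R` makes `R(d)` into an algebra for
the monad `T`. -/
theorem stmt6 {C : Type u₁} {D : Type u₂} [Category.{v₁} C] [Category.{v₂} D]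
    (L : C ⥤ D) (R : D ⥤ C) (adj : L ⊣ R) (T : CategoryTheory.Monad C)
    [∀ d : D, IsIso (adj.counit.app d)]
    [∀ c : C, IsIso (L.map ((T : C ⥤ C).map (adj.unit.app c)))]
    (d : D) (h : (ltr L R T).obj d ⟶ d) :
    (ltrUnit L R adj T d ≫ h = 𝟙 d ∧
      (ltr L R T).map h ≫ h = ltrMul L R adj T d ≫ h) ↔
    (T.η.app (R.obj d) ≫ (adj.homEquiv ((T : C ⥤ C).obj (R.obj d)) d) h = 𝟙 (R.obj d) ∧
      (T : C ⥤ C).map ((adj.homEquiv ((T : C ⥤ C).obj (R.obj d)) d) h) ≫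
          (adj.homEquiv ((T : C ⥤ C).obj (R.obj d)) d) h
        = T.μ.app (R.obj d) ≫ (adj.homEquiv ((T : C ⥤ C).obj (R.obj d)) d) h) :=
  stmt6_general adj (T : C ⥤ C) (T.η.app (R.obj d)) (T.μ.app (R.obj d)) h
end

section
/- Let T be a finite partial order such that for every e ∈ T the set Ici(e) = {f ∈ T : e ≤ f} is totally ordered. Suppose e, f ∈ T are incomparable and b is a least upper bound of {e, f}. Then e < b and f < b, the sets {x : e ≤ x and x < b} and {x : f ≤ x and x < b} have greatest elements p and q respectively, and p ≠ q. -/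
open Set

section Preorder

variable {α : Type*} [Preorder α] {s : Set α} {a b c : α}

theorem lt_of_mem_upperBounds_of_not_le (hb : b ∈ upperBounds s) (ha : a ∈ s) (hc : c ∈ s)
    (hca : ¬ c ≤ a) : a < b :=
  (hb ha).lt_of_not_ge fun hba => hca ((hb hc).trans hba)

theorem exists_isGreatest_of_directedOn_of_wellFoundedOn_gt (hdir : DirectedOn (· ≤ ·) s)
    (hwf : s.WellFoundedOn (· > ·)) (hne : s.Nonempty) : ∃ a, IsGreatest s a := by
  obtain ⟨a, ha⟩ := hwf.exists_maximal hne
  exact ⟨a, ha.prop, hdir.is_top_of_is_max ha.prop fun _ hx => ha.le_of_ge hx⟩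

theorem disjoint_Ico_of_mem_lowerBounds_upperBounds_pair
    (hc : c ∈ lowerBounds (upperBounds {a, b})) : Disjoint (Ico a c) (Ico b c) :=
  disjoint_left.2 fun _ hax hbx => hax.2.not_ge (hc (by simp [hax.1, hbx.1]))

theorem stmt8_general {e f : α}
    (hdir_e : DirectedOn (· ≤ ·) (Ico e b)) (hdir_f : DirectedOn (· ≤ ·) (Ico f b))
    (hwf_e : (Ico e b).WellFoundedOn (· > ·)) (hwf_f : (Ico f b).WellFoundedOn (· > ·))
    (hef : ¬ e ≤ f) (hfe : ¬ f ≤ e) (hb : IsLUB {e, f} b) :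
    e < b ∧ f < b ∧ ∃ p q : α, IsGreatest (Ico e b) p ∧ IsGreatest (Ico f b) q ∧ p ≠ q := by
  have heb : e < b := lt_of_mem_upperBounds_of_not_le hb.1 (by simp) (by simp) hfe
  have hfb : f < b := lt_of_mem_upperBounds_of_not_le hb.1 (by simp) (by simp) hef
  obtain ⟨p, hp⟩ :=
    exists_isGreatest_of_directedOn_of_wellFoundedOn_gt hdir_e hwf_e (nonempty_Ico.2 heb)
  obtain ⟨q, hq⟩ :=
    exists_isGreatest_of_directedOn_of_wellFoundedOn_gt hdir_f hwf_f (nonempty_Ico.2 hfb)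
  have hdisj : Disjoint (Ico e b) (Ico f b) :=
    disjoint_Ico_of_mem_lowerBounds_upperBounds_pair hb.2
  exact ⟨heb, hfb, p, q, hp, hq, hdisj.ne_of_mem hp.1 hq.1⟩

end Preorder

/-- Let `T` be a finite partial order such that for every `e ∈ T` the set
`Ici e = {f : e ≤ f}` is totally ordered.  Suppose `e, f ∈ T` are incomparable and `b` is a
least upper bound of `{e, f}`.  Then `e < b` and `f < b`, the sets `{x | e ≤ x ∧ x < b}` and
`{x | f ≤ x ∧ x < b}` have greatest elements `p` and `q` respectively, and `p ≠ q`. -/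
theorem stmt8 {T : Type*} [PartialOrder T] [Finite T]
    (hchain : ∀ e : T, IsChain (· ≤ ·) (Set.Ici e))
    {e f b : T} (hef : ¬ e ≤ f) (hfe : ¬ f ≤ e)
    (hb : IsLUB {e, f} b) :
    e < b ∧ f < b ∧
      ∃ p q : T, IsGreatest {x : T | e ≤ x ∧ x < b} p ∧
        IsGreatest {x : T | f ≤ x ∧ x < b} q ∧ p ≠ q :=
  stmt8_general ((hchain e).mono Ico_subset_Ici_self).directedOn
    ((hchain f).mono Ico_subset_Ici_self).directedOn
    (toFinite _).wellFoundedOn (toFinite _).wellFoundedOn hef hfe hb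
end

section
/- Let T be a partial order such that for every e ∈ T the set Ici(e) = {f ∈ T : e ≤ f} is totally ordered. Suppose e, f ∈ T are incomparable, e' ≤ e and f' ≤ f, and suppose b is a least upper bound of {e, f} and b' is a least upper bound of {e', f'}. Then b' = b. -/
section Preorder

variable {α : Type*} [Preorder α] {a b a' b' c : α}

theorem le_of_incompRel_of_isChain_Ici (ha : IsChain (· ≤ ·) (Set.Ici a'))
    (hb : IsChain (· ≤ ·) (Set.Ici b')) (hab : IncompRel (· ≤ ·) a b)
    (ha' : a' ≤ a) (hb' : b' ≤ b) (hac : a' ≤ c) (hbc : b' ≤ c) : a ≤ c := by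
  refine (ha.total ha' hac).resolve_right fun hca : c ≤ a => ?_
  have comparable : a ≤ b ∨ b ≤ a := hb.total (hbc.trans hca) hb'
  exact comparable.elim hab.1 hab.2

theorem upperBounds_pair_eq_of_incompRel_of_isChain_Ici (ha : IsChain (· ≤ ·) (Set.Ici a'))
    (hb : IsChain (· ≤ ·) (Set.Ici b')) (hab : IncompRel (· ≤ ·) a b)
    (ha' : a' ≤ a) (hb' : b' ≤ b) : upperBounds {a', b'} = upperBounds {a, b} := by
  simp only [upperBounds_insert, upperBounds_singleton]
  apply Set.Subset.antisymm
  · rintro c ⟨hac, hbc⟩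
    exact ⟨le_of_incompRel_of_isChain_Ici ha hb hab ha' hb' hac hbc,
      le_of_incompRel_of_isChain_Ici hb ha hab.symm hb' ha' hbc hac⟩
  · exact Set.inter_subset_inter (Set.Ici_subset_Ici.2 ha') (Set.Ici_subset_Ici.2 hb')

end Preorder

/-- Let `T` be a partial order such that for every `e ∈ T` the set
`Ici e = {f : e ≤ f}` is totally ordered.  Suppose `e, f ∈ T` are incomparable, `e' ≤ e` and
`f' ≤ f`, and suppose `b` is a least upper bound of `{e, f}` and `b'` is a least upper bound
of `{e', f'}`.  Then `b' = b`. -/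
theorem stmt9 {T : Type*} [PartialOrder T]
    (hchain : ∀ e : T, IsChain (· ≤ ·) (Set.Ici e))
    {e f e' f' b b' : T} (hef : ¬ e ≤ f) (hfe : ¬ f ≤ e)
    (he' : e' ≤ e) (hf' : f' ≤ f)
    (hb : IsLUB {e, f} b) (hb' : IsLUB {e', f'} b') :
    b' = b := by
  have same_bounds : upperBounds {e', f'} = upperBounds {e, f} :=
    upperBounds_pair_eq_of_incompRel_of_isChain_Ici (hchain e') (hchain f') ⟨hef, hfe⟩ he' hf'
  exact ((isLUB_congr same_bounds).1 hb').unique hb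
end

section
/- Let G be a group, E a nonempty finite set, W = Σ_E ≀ G the wreath product, and F a family of subgroups of G. Fix e ∈ E. Then for every subgroup K of W the following are equivalent: (a) π_e((w K w⁻¹) ∩ S_e) ∈ F for every w ∈ W; (b) π_{e'}(K ∩ S_{e'}) ∈ F for every e' ∈ E. In particular, condition (a) does not depend on the chosen element e; condition (a) is the defining condition for membership of K in the semidirect power family F^{⋉E} = (ι_{S_e})_*((π_e)*(F)), so this establishes the explicit description of F^{⋉E}. -/
/-- A *family of subgroups* of a group `G`: a set of subgroups closed under conjugation and
under passing to subgroups. -/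
def IsSubgroupFamily {G : Type*} [Group G] (F : Set (Subgroup G)) : Prop :=
  (∀ H ∈ F, ∀ g : G, Subgroup.map (MulAut.conj g).toMonoidHom H ∈ F) ∧
  (∀ H ∈ F, ∀ K : Subgroup G, K ≤ H → K ∈ F)

/-- The action of `Perm E` on the product group `E → G`, permuting coordinates:
`(σ • f) e = f (σ⁻¹ e)`. -/
def permMulAut (E G : Type*) [Group G] : Equiv.Perm E →* MulAut (E → G) where
  toFun σ := MulEquiv.arrowCongr σ (MulEquiv.refl G)
  map_one' := by ext f e; rfl
  map_mul' σ τ := by ext f e; rfl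

/-- The wreath product `Σ_E ≀ G`, i.e. the semidirect product `Perm E ⋉ Gᴱ`: elements are
pairs `(f, σ)` with `f : E → G` and `σ : Perm E`, and multiplication is
`(f₁, σ₁)(f₂, σ₂) = (f₁ · (σ₁ • f₂), σ₁σ₂)`. -/
abbrev Wreath (E G : Type*) [Group G] := SemidirectProduct (E → G) (Equiv.Perm E) (permMulAut E G)

/-- The subgroup `S_e ≤ Σ_E ≀ G` of pairs `(f, σ)` with `σ e = e`. -/
def wreathStab (E G : Type*) [Group G] (e : E) : Subgroup (Wreath E G) :=
  (MulAction.stabilizer (Equiv.Perm E) e).comap SemidirectProduct.rightHom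

/-- The group homomorphism `π_e : S_e →* G`, `(f, σ) ↦ f e`. -/
def wreathProj (E G : Type*) [Group G] (e : E) : (wreathStab E G e) →* G where
  toFun w := (w : Wreath E G).left e
  map_one' := rfl
  map_mul' a b := by
    have h : (↑a : Wreath E G).right e = e := a.2
    have ha : ((↑a : Wreath E G).right).symm e = e := (Equiv.symm_apply_eq _).mpr h.symm
    show ((a : Wreath E G) * (b : Wreath E G)).left e = _
    rw [SemidirectProduct.mul_left]
    simp [permMulAut, ha]

/-- The image `π_e(K ∩ S_e) ≤ G` of the intersection of `K` with `S_e`. -/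
def wreathProjOf {E G : Type*} [Group G] (K : Subgroup (Wreath E G)) (e : E) : Subgroup G :=
  Subgroup.map (wreathProj E G e) (K.subgroupOf (wreathStab E G e))

/-!
Conjugating by `w = (f, σ)` carries `S_{σ⁻¹ e}` onto `S_e` and intertwines `π_{σ⁻¹ e}` with `π_e`
up to conjugation by `f e`, so `π_e(w K w⁻¹ ∩ S_e)` is a conjugate of `π_{σ⁻¹ e}(K ∩ S_{σ⁻¹ e})`.
For `f = 1` the two subgroups are equal, and since `Perm E` is transitive every point of `E` is of
the form `σ⁻¹ e`.
-/

section

variable {E G : Type*} [Group G]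

theorem mem_wreathProjOf {K : Subgroup (Wreath E G)} {e : E} {g : G} :
    g ∈ wreathProjOf K e ↔ ∃ k ∈ K, k.right e = e ∧ k.left e = g := by
  constructor
  · rintro ⟨k, hk, rfl⟩
    exact ⟨k, hk, k.2, rfl⟩
  · rintro ⟨k, hk, hfix, rfl⟩
    exact ⟨⟨k, hfix⟩, hk, rfl⟩

theorem wreath_mul_left_apply (v w : Wreath E G) (e : E) :
    (v * w).left e = v.left e * w.left (v.right⁻¹ e) :=
  rfl

theorem wreath_inv_left_apply (w : Wreath E G) (e : E) :
    w⁻¹.left e = (w.left (w.right e))⁻¹ :=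
  rfl

theorem wreath_conj_right_apply_eq_iff (w k : Wreath E G) (e : E) :
    (w * k * w⁻¹).right e = e ↔ k.right (w.right⁻¹ e) = w.right⁻¹ e :=
  (Equiv.Perm.eq_inv_iff_eq (f := w.right)).symm

theorem wreath_conj_left_apply {w k : Wreath E G} {e : E}
    (hfix : k.right (w.right⁻¹ e) = w.right⁻¹ e) :
    (w * k * w⁻¹).left e = w.left e * k.left (w.right⁻¹ e) * (w.left e)⁻¹ := by
  have hfix_inv : k.right⁻¹ (w.right⁻¹ e) = w.right⁻¹ e :=
    Equiv.Perm.inv_eq_iff_eq.mpr hfix.symm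
  rw [wreath_mul_left_apply, wreath_mul_left_apply, wreath_inv_left_apply,
    SemidirectProduct.mul_right, mul_inv_rev, Equiv.Perm.mul_apply, hfix_inv,
    Equiv.Perm.coe_inv, Equiv.apply_symm_apply]

theorem wreathProjOf_map_conj (K : Subgroup (Wreath E G)) (w : Wreath E G) (e : E) :
    wreathProjOf (K.map (MulAut.conj w).toMonoidHom) e =
      (wreathProjOf K (w.right⁻¹ e)).map (MulAut.conj (w.left e)).toMonoidHom := by
  ext g
  simp only [Subgroup.mem_map, mem_wreathProjOf]
  constructor
  · rintro ⟨_, ⟨k, hk, rfl⟩, hfix, rfl⟩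
    have hfix' := (wreath_conj_right_apply_eq_iff w k e).mp hfix
    exact ⟨_, ⟨k, hk, hfix', rfl⟩, (wreath_conj_left_apply hfix').symm⟩
  · rintro ⟨_, ⟨k, hk, hfix, rfl⟩, rfl⟩
    exact ⟨_, ⟨k, hk, rfl⟩, (wreath_conj_right_apply_eq_iff w k e).mpr hfix,
      wreath_conj_left_apply hfix⟩

theorem wreathProjOf_map_conj_inr (K : Subgroup (Wreath E G)) (σ : Equiv.Perm E) (e : E) :
    wreathProjOf (K.map (MulAut.conj (SemidirectProduct.inr σ : Wreath E G)).toMonoidHom) e =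
      wreathProjOf K (σ⁻¹ e) := by
  rw [wreathProjOf_map_conj, SemidirectProduct.left_inr, SemidirectProduct.right_inr,
    Pi.one_apply, map_one]
  exact Subgroup.map_id _

theorem stmt14_general {F : Set (Subgroup G)}
    (hF : ∀ H ∈ F, ∀ g : G, H.map (MulAut.conj g).toMonoidHom ∈ F) (e : E)
    (K : Subgroup (Wreath E G)) :
    (∀ w : Wreath E G, wreathProjOf (K.map (MulAut.conj w).toMonoidHom) e ∈ F) ↔
      ∀ e' : E, wreathProjOf K e' ∈ F := by
  classical
  constructor
  · intro hconj e'
    have hswap := hconj (SemidirectProduct.inr (Equiv.swap e e'))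
    rwa [wreathProjOf_map_conj_inr, Equiv.swap_inv, Equiv.swap_apply_left] at hswap
  · intro hproj w
    rw [wreathProjOf_map_conj]
    exact hF _ (hproj _) _

end

/-- Let `G` be a group, `E` a nonempty finite set, `W = Σ_E ≀ G` the wreath
product, and `F` a family of subgroups of `G`.  Fix `e ∈ E`.  Then for every subgroup
`K ≤ W` the following are equivalent: (a) `π_e((w K w⁻¹) ∩ S_e) ∈ F` for every `w ∈ W`;
(b) `π_{e'}(K ∩ S_{e'}) ∈ F` for every `e' ∈ E`.  In particular condition (a) does not
depend on the chosen element `e`; (a) is the defining condition for membership of `K` in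
the semidirect power family `F^{⋉E} = (ι_{S_e})_*((π_e)*(F))`, so this establishes the
explicit description of `F^{⋉E}`. -/
theorem stmt14 {E G : Type*} [Finite E] [Nonempty E] [Group G]
    (F : Set (Subgroup G)) (hF : IsSubgroupFamily F) (e : E)
    (K : Subgroup (Wreath E G)) :
    (∀ w : Wreath E G,
        wreathProjOf (Subgroup.map (MulAut.conj w).toMonoidHom K) e ∈ F) ↔
    (∀ e' : E, wreathProjOf K e' ∈ F) :=
  stmt14_general hF.1 e K
end
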